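/- For a continuous semilattice S with zero, the relation E_S = {(x,y) ∈ S × S : y ≤ x} is a pseudo-invertible ambiguous representation of S in S, and it is neutral for composition: for every pseudo-invertible ambiguous representation R ⊆ S₁ × S₂ one has E_{S₁};R = R and R;E_{S₂} = R. -/

import Mathlib

/-- A dcpo: every nonempty directed subset has a least upper bound. -/
def IsDcpo (α : Type*) [PartialOrder α] : Prop :=
  ∀ D : Set α, D.Nonempty → DirectedOn (· ≤ ·) D → ∃ a : α, IsLUB D a

/-- Scott closed: a lower set closed under suprema of its (nonempty) directed subsets. -/
def ScottClosed {α : Type*} [PartialOrder α] (A : Set α) : Prop :=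
  IsLowerSet A ∧
    ∀ D : Set α, D ⊆ A → D.Nonempty → DirectedOn (· ≤ ·) D → ∀ a : α, IsLUB D a → a ∈ A

/-- Scott closure: the least Scott closed set containing `A`. -/
def scottClosure {α : Type*} [PartialOrder α] (A : Set α) : Set α :=
  ⋂₀ {C : Set α | ScottClosed C ∧ A ⊆ C}

/-- `x` is way below `y`. -/
def WayBelow {α : Type*} [PartialOrder α] (x y : α) : Prop :=
  ∀ D : Set α, D.Nonempty → DirectedOn (· ≤ ·) D → ∀ a : α, IsLUB D a → y ≤ a → ∃ d ∈ D, x ≤ d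

/-- A continuous (meet-)semilattice with zero: a dcpo meet-semilattice with bottom in which
every element is the directed supremum of the elements way below it. -/
def IsContinuousSemilattice (α : Type*) [SemilatticeInf α] [OrderBot α] : Prop :=
  IsDcpo α ∧
    ∀ y : α, DirectedOn (· ≤ ·) {x : α | WayBelow x y} ∧ IsLUB {x : α | WayBelow x y} y

/-- A compatibility `P : S × S' → {0,1}` (encoded with `Prop` as the two-element lattice,
`P x y` meaning `P(x,y) = 1`): it preserves binary meets in each variable separately,
sends pairs containing a bottom element to `0`, and is Scott continuous (preserves
suprema of nonempty directed subsets of the product). -/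
def IsCompatibility {S S' : Type*} [SemilatticeInf S] [OrderBot S]
    [SemilatticeInf S'] [OrderBot S'] (P : S → S' → Prop) : Prop :=
  (∀ x₁ x₂ y, P (x₁ ⊓ x₂) y ↔ P x₁ y ∧ P x₂ y) ∧
  (∀ x y₁ y₂, P x (y₁ ⊓ y₂) ↔ P x y₁ ∧ P x y₂) ∧
  (∀ y, ¬ P ⊥ y) ∧ (∀ x, ¬ P x ⊥) ∧
  (∀ D : Set (S × S'), D.Nonempty → DirectedOn (· ≤ ·) D → ∀ a : S × S', IsLUB D a →
    (P a.1 a.2 ↔ ∃ p ∈ D, P p.1 p.2))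

/-- A separating compatibility. -/
def IsSeparatingCompatibility {S S' : Type*} [SemilatticeInf S] [OrderBot S]
    [SemilatticeInf S'] [OrderBot S'] (P : S → S' → Prop) : Prop :=
  IsCompatibility P ∧
  (∀ x₁ x₂ : S, (∀ y, P x₁ y ↔ P x₂ y) → x₁ = x₂) ∧
  (∀ y₁ y₂ : S', (∀ x, P x y₁ ↔ P x y₂) → y₁ = y₂)

/-- Transversal of `A ⊆ S` w.r.t. a compatibility `P : S × S' → {0,1}`:
all `y ∈ S'` with `P(x,y) = 0` for every `x ∈ A`. -/
def transversal {S S' : Type*} (P : S → S' → Prop) (A : Set S) : Set S' :=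
  {y : S' | ∀ x ∈ A, ¬ P x y}

/-- A (crisp) ambiguous representation of `S₁` in `S₂`. -/
def AmbRep {S₁ S₂ : Type*} [PartialOrder S₁] [PartialOrder S₂] (R : Set (S₁ × S₂)) : Prop :=
  (∀ x : S₁, ({y : S₂ | (x, y) ∈ R}).Nonempty ∧ ScottClosed {y : S₂ | (x, y) ∈ R}) ∧
  (∀ y : S₂, IsUpperSet {x : S₁ | (x, y) ∈ R})

/-- The pseudo-inverse of a relation `R ⊆ S₁ × S₂` w.r.t. compatibilities
`P₁ : S₁ × T₁ → {0,1}` and `P₂ : S₂ × T₂ → {0,1}`. -/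
def psInv {S₁ S₂ T₁ T₂ : Type*} (P₁ : S₁ → T₁ → Prop) (P₂ : S₂ → T₂ → Prop)
    (R : Set (S₁ × S₂)) : Set (T₂ × T₁) :=
  {p : T₂ × T₁ | ∀ x : S₁, P₁ x p.2 → ∃ y : S₂, (x, y) ∈ R ∧ P₂ y p.1}

/-- Composition `R ; Q` of ambiguous representations. -/
def ambComp {S₁ S₂ S₃ : Type*} [PartialOrder S₃]
    (R : Set (S₁ × S₂)) (Q : Set (S₂ × S₃)) : Set (S₁ × S₃) :=
  {p : S₁ × S₃ | ∀ z' : S₃, WayBelow z' p.2 → ∃ y : S₂, (p.1, y) ∈ R ∧ (y, z') ∈ Q}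

/-- Pseudo-invertibility condition (c). -/
def PseudoInvertible {S₁ S₂ : Type*} [PartialOrder S₁] [PartialOrder S₂]
    (R : Set (S₁ × S₂)) : Prop :=
  ∀ x y, (x, y) ∈ R → ∀ y', WayBelow y' y → ∃ x', WayBelow x' x ∧ (x', y') ∈ R

/-- An `L`-fuzzy ambiguous representation of `S₁` in `S₂`. -/
def LAmbRep {S₁ S₂ L : Type*} [PartialOrder S₁] [PartialOrder S₂] [PartialOrder L]
    (R : Set (S₁ × S₂ × L)) : Prop :=
  (∀ (y : S₂) (α : L), IsUpperSet {x : S₁ | (x, y, α) ∈ R}) ∧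
  (∀ (x : S₁) (α : L),
    ({y : S₂ | (x, y, α) ∈ R}).Nonempty ∧ ScottClosed {y : S₂ | (x, y, α) ∈ R}) ∧
  (∀ (x : S₁) (y : S₂), ({α : L | (x, y, α) ∈ R}).Nonempty ∧
    DirectedOn (· ≤ ·) {α : L | (x, y, α) ∈ R} ∧ ScottClosed {α : L | (x, y, α) ∈ R})

/-- The `α`-cut of an `L`-fuzzy relation. -/
def lCut {S₁ S₂ L : Type*} (R : Set (S₁ × S₂ × L)) (α : L) : Set (S₁ × S₂) :=
  {p : S₁ × S₂ | (p.1, p.2, α) ∈ R}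

/-- The pseudo-inverse of an `L`-fuzzy ambiguous representation, given through its
`α`-cuts: `(R⊤)_α = ⋂_{β ≪ α} (R_β)⊤`. -/
def lpsInv {S₁ S₂ T₁ T₂ L : Type*} [PartialOrder L]
    (P₁ : S₁ → T₁ → Prop) (P₂ : S₂ → T₂ → Prop) (R : Set (S₁ × S₂ × L)) :
    Set (T₂ × T₁ × L) :=
  {p : T₂ × T₁ × L | ∀ β : L, WayBelow β p.2.2 → (p.1, p.2.1) ∈ psInv P₁ P₂ (lCut R β)}

/-- Pseudo-invertibility condition (d) for `L`-fuzzy ambiguous representations. -/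
def LPseudoInvertible {S₁ S₂ L : Type*} [PartialOrder S₁] [PartialOrder S₂] [PartialOrder L]
    (R : Set (S₁ × S₂ × L)) : Prop :=
  ∀ x y α, (x, y, α) ∈ R → ∀ y', WayBelow y' y → ∀ α', WayBelow α' α →
    ∃ x', WayBelow x' x ∧ (x', y', α') ∈ R

/-- A unital quantale structure on a complete lattice: an associative multiplication
distributing over arbitrary suprema in each variable, with the top element as two-sided
unit. -/
def IsQuantaleMul {L : Type*} [CompleteLattice L] (mul : L → L → L) : Prop :=
  (∀ a b c, mul (mul a b) c = mul a (mul b c)) ∧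
  (∀ (s : Set L) (b : L), mul (sSup s) b = ⨆ a ∈ s, mul a b) ∧
  (∀ (a : L) (s : Set L), mul a (sSup s) = ⨆ b ∈ s, mul a b) ∧
  (∀ a, mul ⊤ a = a) ∧ (∀ a, mul a ⊤ = a)

/-- Composition `R ⊛ Q` of `L`-fuzzy ambiguous representations w.r.t. a quantale
multiplication `mul` on `L`. -/
def lComp {S₁ S₂ S₃ L : Type*} [PartialOrder S₃] [CompleteLattice L] (mul : L → L → L)
    (R : Set (S₁ × S₂ × L)) (Q : Set (S₂ × S₃ × L)) : Set (S₁ × S₃ × L) :=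
  {p : S₁ × S₃ × L | ∀ z' : S₃, WayBelow z' p.2.1 → ∀ α' : L, WayBelow α' p.2.2 →
    ∃ (n : ℕ) (y : Fin n → S₂) (β γ : Fin n → L),
      (∀ i, (p.1, y i, β i) ∈ R ∧ (y i, z', γ i) ∈ Q) ∧ α' ≤ ⨆ i, mul (β i) (γ i)}

/-! Composition with `E_S` on either side replaces each cut `xR` by the set of points all of whose
way-below approximants lie in `xR`: on the left because the cuts `Ry` are upper sets, on the right
because the cuts `xR` are lower sets. A Scott closed set of a continuous poset already contains
every such point, so both compositions return `R`. -/

/-- A continuous poset: every element is the supremum of the nonempty directed set of elements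
way below it. Nonemptiness is stated explicitly because there need not be a bottom element. -/
def IsContinuousPoset (α : Type*) [PartialOrder α] : Prop :=
  ∀ y : α, {x : α | WayBelow x y}.Nonempty ∧ DirectedOn (· ≤ ·) {x : α | WayBelow x y} ∧
    IsLUB {x : α | WayBelow x y} y

/-- The relation `E_S = {(x, y) : y ≤ x}`, the identity for composition of ambiguous
representations. -/
def ambId (α : Type*) [LE α] : Set (α × α) :=
  {p : α × α | p.2 ≤ p.1}

section WayBelow

variable {α : Type*} [PartialOrder α] {x y z : α}

theorem WayBelow.le (h : WayBelow x y) : x ≤ y := by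
  obtain ⟨d, rfl, hxd⟩ :=
    h {y} (Set.singleton_nonempty y) (directedOn_singleton y) y isLUB_singleton le_rfl
  exact hxd

theorem WayBelow.trans_le (hxy : WayBelow x y) (hyz : y ≤ z) : WayBelow x z :=
  fun D hne hdir a ha hza => hxy D hne hdir a ha (hyz.trans hza)

theorem bot_wayBelow [OrderBot α] (y : α) : WayBelow ⊥ y :=
  fun _ ⟨d, hd⟩ _ _ _ _ => ⟨d, hd, bot_le⟩

theorem ScottClosed.mem_iff_forall_wayBelow (hα : IsContinuousPoset α) {A : Set α}
    (hA : ScottClosed A) : y ∈ A ↔ ∀ x, WayBelow x y → x ∈ A := by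
  refine ⟨fun hy x hxy => hA.1 hxy.le hy, fun h => ?_⟩
  obtain ⟨hne, hdir, hlub⟩ := hα y
  exact hA.2 {x | WayBelow x y} h hne hdir y hlub

end WayBelow

theorem IsContinuousSemilattice.isContinuousPoset {α : Type*} [SemilatticeInf α] [OrderBot α]
    (hα : IsContinuousSemilattice α) : IsContinuousPoset α :=
  fun y => ⟨⟨⊥, bot_wayBelow y⟩, hα.2 y⟩

theorem scottClosed_Iic {α : Type*} [PartialOrder α] (x : α) : ScottClosed (Set.Iic x) :=
  ⟨isLowerSet_Iic x, fun _ hD _ _ _ ha => ha.2 hD⟩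

theorem ambRep_ambId (α : Type*) [PartialOrder α] : AmbRep (ambId α) :=
  ⟨fun x => ⟨Set.nonempty_Iic, scottClosed_Iic x⟩, isUpperSet_Ici⟩

theorem pseudoInvertible_ambId (α : Type*) [PartialOrder α] : PseudoInvertible (ambId α) :=
  fun _ _ hyx y' hy' => ⟨y', hy'.trans_le hyx, le_refl y'⟩

section Neutrality

variable {S₁ S₂ : Type*} [PartialOrder S₂] {R : Set (S₁ × S₂)} {x : S₁} {z : S₂}

theorem mem_ambId_ambComp_iff [Preorder S₁]
    (hupper : ∀ y : S₂, IsUpperSet {x : S₁ | (x, y) ∈ R}) :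
    (x, z) ∈ ambComp (ambId S₁) R ↔ ∀ z', WayBelow z' z → (x, z') ∈ R :=
  forall₂_congr fun z' _ =>
    ⟨fun ⟨_, hyx, hyz'⟩ => hupper z' hyx hyz', fun hxz' => ⟨x, le_refl x, hxz'⟩⟩

theorem mem_ambComp_ambId_iff (hlower : ∀ x : S₁, IsLowerSet {y : S₂ | (x, y) ∈ R}) :
    (x, z) ∈ ambComp R (ambId S₂) ↔ ∀ z', WayBelow z' z → (x, z') ∈ R :=
  forall₂_congr fun z' _ =>
    ⟨fun ⟨_, hxy, hz'y⟩ => hlower x hz'y hxy, fun hxz' => ⟨z', hxz', le_refl z'⟩⟩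

theorem ambId_ambComp [Preorder S₁] (h₂ : IsContinuousPoset S₂)
    (hclosed : ∀ x : S₁, ScottClosed {y : S₂ | (x, y) ∈ R})
    (hupper : ∀ y : S₂, IsUpperSet {x : S₁ | (x, y) ∈ R}) :
    ambComp (ambId S₁) R = R :=
  Set.ext fun (x, _) => (mem_ambId_ambComp_iff hupper).trans
    ((hclosed x).mem_iff_forall_wayBelow h₂).symm

theorem ambComp_ambId (h₂ : IsContinuousPoset S₂)
    (hclosed : ∀ x : S₁, ScottClosed {y : S₂ | (x, y) ∈ R}) :
    ambComp R (ambId S₂) = R :=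
  Set.ext fun (x, _) => (mem_ambComp_ambId_iff fun x => (hclosed x).1).trans
    ((hclosed x).mem_iff_forall_wayBelow h₂).symm

end Neutrality

theorem stmt13_general {S S₁ S₂ : Type*} [PartialOrder S] [Preorder S₁] [PartialOrder S₂]
    (h₂ : IsContinuousPoset S₂) (R : Set (S₁ × S₂))
    (hclosed : ∀ x : S₁, ScottClosed {y : S₂ | (x, y) ∈ R})
    (hupper : ∀ y : S₂, IsUpperSet {x : S₁ | (x, y) ∈ R}) :
    (AmbRep (ambId S) ∧ PseudoInvertible (ambId S)) ∧
    ambComp (ambId S₁) R = R ∧ ambComp R (ambId S₂) = R :=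
  ⟨⟨ambRep_ambId S, pseudoInvertible_ambId S⟩,
    ambId_ambComp h₂ hclosed hupper, ambComp_ambId h₂ hclosed⟩

/-- For a continuous semilattice `S` with zero, `E_S = {(x,y) : y ≤ x}` is
a pseudo-invertible ambiguous representation, and it is neutral for composition:
`E_{S₁};R = R` and `R;E_{S₂} = R` for every pseudo-invertible ambiguous
representation `R ⊆ S₁ × S₂`. -/
theorem stmt13 {S S₁ S₂ : Type*}
    [SemilatticeInf S] [OrderBot S]
    [SemilatticeInf S₁] [OrderBot S₁] [SemilatticeInf S₂] [OrderBot S₂]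
    (hS : IsContinuousSemilattice S)
    (h₁ : IsContinuousSemilattice S₁) (h₂ : IsContinuousSemilattice S₂)
    (R : Set (S₁ × S₂)) (hR : AmbRep R) (hRpi : PseudoInvertible R) :
    (AmbRep {p : S × S | p.2 ≤ p.1} ∧ PseudoInvertible {p : S × S | p.2 ≤ p.1}) ∧
    ambComp {p : S₁ × S₁ | p.2 ≤ p.1} R = R ∧
    ambComp R {p : S₂ × S₂ | p.2 ≤ p.1} = R := by
  exact stmt13_general h₂.isContinuousPoset R (fun x => (hR.1 x).2) hR.2
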